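/- arXiv:0805.3842 — 3 statements merged into one kernel-verified Lean document; each statement's English description precedes it below -/
import Mathlib

section
/- Let (X, Σ, μ) be a finite measure space and let u : X → ℝ be a measurable function that is bounded from above. Then there exists a weight χ : ℝ → ℝ (that is, χ is convex, monotone nondecreasing, χ(0) = 0, and χ(t) → −∞ as t → −∞) such that the composition χ ∘ u is μ-integrable. -/
/-!
The weight is a series of truncated linear functions `χ t = ∑ i, max (b i * t) (-1)` with `b i > 0`
and `∑ i, b i < ∞`. It is convex, monotone and vanishes at `0` term by term, and it tends to `-∞` at
`-∞` because every one of the infinitely many terms tends to `-1` there. For `0 ≤ c ≤ 1` the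
function `max (c * u) (-1)` is dominated by `max u (-1)`, so its `L¹` norm tends to `0` as `c → 0⁺`;
hence the `b i` can be chosen so small that the `L¹` norms of the terms of `χ ∘ u` are summable.
-/

open Filter MeasureTheory Set Topology
open scoped ENNReal

section Series

variable {ι : Type*}

theorem convexOn_tsum {E : Type*} [AddCommMonoid E] [Module ℝ E] {s : Set E} {f : ι → E → ℝ}
    (hs : Convex ℝ s) (hf : ∀ i, ConvexOn ℝ s (f i)) (hsum : ∀ x ∈ s, Summable fun i => f i x) :
    ConvexOn ℝ s fun x => ∑' i, f i x := by
  refine ⟨hs, fun x hx y hy p q hp hq hpq => ?_⟩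
  have hsum_x : Summable fun i => p • f i x := (hsum x hx).const_smul p
  have hsum_y : Summable fun i => q • f i y := (hsum y hy).const_smul q
  calc ∑' i, f i (p • x + q • y)
      ≤ ∑' i, (p • f i x + q • f i y) :=
        (hsum _ (hs hx hy hp hq hpq)).tsum_le_tsum (fun i => (hf i).2 hx hy hp hq hpq)
          (hsum_x.add hsum_y)
    _ = p • ∑' i, f i x + q • ∑' i, f i y := by
        rw [hsum_x.tsum_add hsum_y, (hsum x hx).tsum_const_smul, (hsum y hy).tsum_const_smul]

theorem lintegral_enorm_tsum_le [Countable ι] {X E : Type*} [MeasurableSpace X] {μ : Measure X}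
    [NormedAddCommGroup E] {f : ι → X → E} (hf : ∀ i, AEStronglyMeasurable (f i) μ) :
    ∫⁻ x, ‖∑' i, f i x‖ₑ ∂μ ≤ ∑' i, ∫⁻ x, ‖f i x‖ₑ ∂μ :=
  calc ∫⁻ x, ‖∑' i, f i x‖ₑ ∂μ
      ≤ ∫⁻ x, ∑' i, ‖f i x‖ₑ ∂μ := lintegral_mono fun _ => enorm_tsum_le_tsum_enorm
    _ = ∑' i, ∫⁻ x, ‖f i x‖ₑ ∂μ := lintegral_tsum fun i => (hf i).enorm

theorem exists_pos_summable_tsum_ne_top (ι : Type*) [Countable ι] {F : ℝ → ℝ≥0∞}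
    (hF : Tendsto F (𝓝[>] 0) (𝓝 0)) :
    ∃ b : ι → ℝ, (∀ i, 0 < b i) ∧ Summable b ∧ ∑' i, F (b i) ≠ ∞ := by
  obtain ⟨ε, hε_pos, hε_sum⟩ := ENNReal.exists_pos_sum_of_countable one_ne_zero ι
  have hε_ne_top : ∑' i, (ε i : ℝ≥0∞) ≠ ∞ := hε_sum.ne_top
  have exists_small : ∀ i, ∃ c : ℝ, 0 < c ∧ c ≤ ε i ∧ F c ≤ ε i := fun i => by
    have hF_le : ∀ᶠ c in 𝓝[>] 0, F c ≤ ε i :=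
      hF.eventually_le_const (ENNReal.coe_pos.2 (hε_pos i))
    have h_Ioc : ∀ᶠ c : ℝ in 𝓝[>] 0, c ∈ Ioc 0 (ε i : ℝ) :=
      Ioc_mem_nhdsGT (NNReal.coe_pos.2 (hε_pos i))
    obtain ⟨c, hFc, hc⟩ := (hF_le.and h_Ioc).exists
    exact ⟨c, hc.1, hc.2, hFc⟩
  choose b hb_pos hb_le hFb using exists_small
  have hε_summable : Summable fun i => (ε i : ℝ) :=
    NNReal.summable_coe.2 (ENNReal.tsum_coe_ne_top_iff_summable.1 hε_ne_top)
  exact ⟨b, hb_pos, hε_summable.of_nonneg_of_le (fun i => (hb_pos i).le) hb_le,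
    ne_top_of_le_ne_top hε_ne_top (ENNReal.tsum_le_tsum hFb)⟩

end Series

section TruncatedLinear

variable {c : ℝ}

theorem abs_max_mul_neg_one_le_mul_abs (hc : 0 ≤ c) (t : ℝ) : |max (c * t) (-1)| ≤ c * |t| := by
  have h_abs : |c * t| = c * |t| := by rw [abs_mul, abs_of_nonneg hc]
  have h_bounds := abs_le.1 h_abs.le
  exact abs_le.2 ⟨h_bounds.1.trans (le_max_left _ _),
    max_le h_bounds.2 (by linarith [mul_nonneg hc (abs_nonneg t)])⟩

theorem abs_max_mul_neg_one_le_abs_max (hc₀ : 0 ≤ c) (hc₁ : c ≤ 1) (t : ℝ) :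
    |max (c * t) (-1)| ≤ |max t (-1)| := by
  rcases le_total (-1) t with ht | ht
  · calc |max (c * t) (-1)| ≤ c * |t| := abs_max_mul_neg_one_le_mul_abs hc₀ t
      _ ≤ |t| := mul_le_of_le_one_left (abs_nonneg t) hc₁
      _ = |max t (-1)| := by rw [max_eq_left ht]
  · have h_nonpos : c * t ≤ 0 := mul_nonpos_of_nonneg_of_nonpos hc₀ (by linarith)
    rw [max_eq_right ht, abs_neg, abs_one]
    exact abs_le.2 ⟨le_max_right _ _, max_le (by linarith) (by norm_num)⟩

variable {X : Type*} [MeasurableSpace X] {μ : Measure X} {u : X → ℝ}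

theorem tendsto_lintegral_enorm_max_mul_neg_one (hu : AEMeasurable u μ)
    (hint : Integrable (fun x => max (u x) (-1)) μ) :
    Tendsto (fun c => ∫⁻ x, ‖max (c * u x) (-1)‖ₑ ∂μ) (𝓝[>] 0) (𝓝 0) := by
  have h_dominated : ∀ᶠ c in 𝓝[>] (0 : ℝ), ∀ᵐ x ∂μ,
      ‖max (c * u x) (-1)‖ₑ ≤ ‖max (u x) (-1)‖ₑ := by
    filter_upwards [Ioc_mem_nhdsGT zero_lt_one] with c hc
    exact ae_of_all μ fun x =>
      enorm_le_iff_norm_le.2 (abs_max_mul_neg_one_le_abs_max hc.1.le hc.2 (u x))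
  have h_pointwise (x : X) :
      Tendsto (fun c => ‖max (c * u x) (-1)‖ₑ) (𝓝[>] 0) (𝓝 0) := by
    have h_cont : Continuous fun c => ‖max (c * u x) (-1)‖ₑ := by fun_prop
    simpa using (h_cont.tendsto 0).mono_left nhdsWithin_le_nhds
  simpa using tendsto_lintegral_filter_of_dominated_convergence' _
    (Eventually.of_forall fun c => by fun_prop) h_dominated hint.2.ne (ae_of_all μ h_pointwise)

theorem integrable_max_const_of_bddAbove [IsFiniteMeasure μ] (hu : AEMeasurable u μ)
    (hbdd : BddAbove (range u)) (a : ℝ) : Integrable (fun x => max (u x) a) μ := by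
  obtain ⟨M, hM⟩ := hbdd
  exact .of_mem_Icc a (max M a) (hu.max aemeasurable_const) (ae_of_all μ fun x =>
    ⟨le_max_right _ _, max_le_max_right a (hM (mem_range_self x))⟩)

end TruncatedLinear

/-- A weight: a convex nondecreasing function on the real line that vanishes at the origin and
tends to `-∞` at `-∞`. -/
structure IsWeight (χ : ℝ → ℝ) : Prop where
  convexOn : ConvexOn ℝ univ χ
  monotone : Monotone χ
  map_zero : χ 0 = 0
  tendsto_atBot : Tendsto χ atBot atBot

/-- The series of truncated linear functions `t ↦ max (b i * t) (-1)` with slopes `b`. It is a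
weight when `b` is a summable infinite family of positive numbers; where the series diverges its
value is the default `0` of `tsum`. -/
noncomputable def truncatedLinearSeries {ι : Type*} (b : ι → ℝ) (t : ℝ) : ℝ :=
  ∑' i, max (b i * t) (-1)

section TruncatedLinearSeries

variable {ι : Type*} {b : ι → ℝ}

theorem summable_max_mul_neg_one (hb : ∀ i, 0 ≤ b i) (hsum : Summable b) (t : ℝ) :
    Summable fun i => max (b i * t) (-1) :=
  (hsum.mul_right |t|).of_norm_bounded fun i => abs_max_mul_neg_one_le_mul_abs (hb i) t

theorem convexOn_truncatedLinearSeries (hb : ∀ i, 0 ≤ b i) (hsum : Summable b) :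
    ConvexOn ℝ univ (truncatedLinearSeries b) :=
  convexOn_tsum convex_univ
    (fun i => ((LinearMap.mulLeft ℝ (b i)).convexOn convex_univ).sup
      (convexOn_const (-1) convex_univ))
    fun t _ => summable_max_mul_neg_one hb hsum t

theorem monotone_truncatedLinearSeries (hb : ∀ i, 0 ≤ b i) (hsum : Summable b) :
    Monotone (truncatedLinearSeries b) := fun s t hst =>
  (summable_max_mul_neg_one hb hsum s).tsum_le_tsum
    (fun i => max_le_max_right _ (mul_le_mul_of_nonneg_left hst (hb i)))
    (summable_max_mul_neg_one hb hsum t)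

theorem truncatedLinearSeries_zero : truncatedLinearSeries b 0 = 0 := by
  simp [truncatedLinearSeries]

theorem truncatedLinearSeries_le_sum (hb : ∀ i, 0 ≤ b i) (hsum : Summable b) {t : ℝ} (ht : t ≤ 0)
    (s : Finset ι) : truncatedLinearSeries b t ≤ ∑ i ∈ s, max (b i * t) (-1) := by
  have h_nonpos (i : ι) : max (b i * t) (-1) ≤ 0 :=
    max_le (mul_nonpos_of_nonneg_of_nonpos (hb i) ht) (by norm_num)
  have h_le := (summable_max_mul_neg_one hb hsum t).neg.sum_le_tsum s
    fun i _ => neg_nonneg.2 (h_nonpos i)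
  rw [tsum_neg, Finset.sum_neg_distrib] at h_le
  exact neg_le_neg_iff.1 h_le

theorem tendsto_truncatedLinearSeries_atBot [Infinite ι] (hb : ∀ i, 0 < b i) (hsum : Summable b) :
    Tendsto (truncatedLinearSeries b) atBot atBot := by
  refine tendsto_atBot.2 fun C => ?_
  obtain ⟨N, hN⟩ := exists_nat_ge (-C)
  obtain ⟨s, hs⟩ := Infinite.exists_subset_card_eq ι N
  have h_truncated : ∀ᶠ t in atBot, ∀ i ∈ s, b i * t ≤ -1 :=
    (eventually_all_finset s).2 fun i _ =>
      (tendsto_id.const_mul_atBot (hb i)).eventually_le_atBot (-1)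
  filter_upwards [h_truncated, eventually_le_atBot 0] with t ht ht₀
  calc truncatedLinearSeries b t
      ≤ ∑ i ∈ s, max (b i * t) (-1) :=
        truncatedLinearSeries_le_sum (fun i => (hb i).le) hsum ht₀ s
    _ = ∑ i ∈ s, (-1 : ℝ) := Finset.sum_congr rfl fun i hi => max_eq_right (ht i hi)
    _ = -N := by simp [hs]
    _ ≤ C := neg_le.1 hN

theorem isWeight_truncatedLinearSeries [Infinite ι] (hb : ∀ i, 0 < b i) (hsum : Summable b) :
    IsWeight (truncatedLinearSeries b) where
  convexOn := convexOn_truncatedLinearSeries (fun i => (hb i).le) hsum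
  monotone := monotone_truncatedLinearSeries (fun i => (hb i).le) hsum
  map_zero := truncatedLinearSeries_zero
  tendsto_atBot := tendsto_truncatedLinearSeries_atBot hb hsum

end TruncatedLinearSeries

theorem exists_weight_integrable_comp_general {X : Type*} [MeasurableSpace X] {μ : Measure X}
    {u : X → ℝ} (hu : AEMeasurable u μ) (hint : Integrable (fun x => max (u x) (-1)) μ) :
    ∃ χ : ℝ → ℝ, IsWeight χ ∧ Integrable (fun x => χ (u x)) μ := by
  obtain ⟨b, hb, hsum, hb_norms⟩ :=
    exists_pos_summable_tsum_ne_top ℕ (tendsto_lintegral_enorm_max_mul_neg_one hu hint)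
  have h_weight : IsWeight (truncatedLinearSeries b) := isWeight_truncatedLinearSeries hb hsum
  have h_terms (n : ℕ) : AEStronglyMeasurable (fun x => max (b n * u x) (-1)) μ := by fun_prop
  exact ⟨truncatedLinearSeries b, h_weight,
    (h_weight.monotone.measurable.comp_aemeasurable hu).aestronglyMeasurable,
    (lintegral_enorm_tsum_le h_terms).trans_lt hb_norms.lt_top⟩

/-- Lemma 1.3 ("basicweight"): on a finite measure space, for any measurable
real-valued function `u` bounded from above, there is a weight `χ`
(convex, monotone nondecreasing, `χ 0 = 0`, tending to `-∞` at `-∞`)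
such that `χ ∘ u` is integrable. -/
theorem exists_weight_integrable_comp
    {X : Type*} [MeasurableSpace X] (μ : MeasureTheory.Measure X)
    [MeasureTheory.IsFiniteMeasure μ]
    (u : X → ℝ) (hu : Measurable u) (hbdd : BddAbove (Set.range u)) :
    ∃ χ : ℝ → ℝ,
      ConvexOn ℝ Set.univ χ ∧ Monotone χ ∧ χ 0 = 0 ∧
      Filter.Tendsto χ Filter.atBot Filter.atBot ∧
      MeasureTheory.Integrable (fun x => χ (u x)) μ := by
  obtain ⟨χ, hχ, hint⟩ := exists_weight_integrable_comp_general hu.aemeasurable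
    (integrable_max_const_of_bddAbove (μ := μ) hu.aemeasurable hbdd (-1))
  exact ⟨χ, hχ.convexOn, hχ.monotone, hχ.map_zero, hχ.tendsto_atBot, hint⟩
end

section
/- For parameters a, b, c ∈ ℂ define F_{a,b,c} : ℂ³ → ℂ³ by F_{a,b,c}(x, y, z) = (bcx(−cx + acy + z), acy(x − ay + abz), abz(bcx + y − bz)). Then for all nonzero a, b, c ∈ ℂ and every v ∈ ℂ³ there exists t ∈ ℂ such that F_{a⁻¹, b⁻¹, c⁻¹}(F_{a,b,c}(v)) = t • v; moreover there exists some v ∈ ℂ³ with F_{a⁻¹, b⁻¹, c⁻¹}(F_{a,b,c}(v)) ≠ 0. (Projectively this says: the birational map f_{abc} of ℙ² is invertible with inverse f_{a⁻¹b⁻¹c⁻¹}.) -/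
/-- Homogeneous lift of the birational map `f_{abc}` of `ℙ²`. -/
def Fabc (a b c : ℂ) : ℂ × ℂ × ℂ → ℂ × ℂ × ℂ := fun v =>
  (b * c * v.1 * (-c * v.1 + a * c * v.2.1 + v.2.2),
   a * c * v.2.1 * (v.1 - a * v.2.1 + a * b * v.2.2),
   a * b * v.2.2 * (b * c * v.1 + v.2.1 - b * v.2.2))

/-!
If `abc ≠ -1`, the base points of `f_{abc}` are `[a : 1 : 0]`, `[0 : b : 1]` and `[1 : 0 : c]`, and
the lines joining them in pairs are the zero loci of the three linear factors `ℓ₁, ℓ₂, ℓ₃` of the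
coordinates `bcx ℓ₁, cay ℓ₂, abz ℓ₃`. Each line is contracted by `f_{abc}` to a base point of
`f_{a⁻¹b⁻¹c⁻¹}`, so each line through two of those base points pulls back to the product of two of
the `ℓᵢ`: `ℓ₁' ∘ F = ℓ₂ ℓ₃`, and cyclically. These are polynomial identities, so they persist for
`abc = -1`, and the composition of the lifts multiplies every coordinate by `ℓ₁ ℓ₂ ℓ₃`.
-/

section ExceptionalForm

variable {K : Type*}

/-- The linear form `-p x + p q y + z`, which for `(p, q) = (c, a)` defines the line through the
base points `[a : 1 : 0]` and `[1 : 0 : c]` of `f_{abc}`. The other two lines joining base points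
are obtained by permuting `(a, b, c)` and `(x, y, z)` cyclically, so all three are instances of this
one form. -/
def exceptionalForm [Ring K] (p q x y z : K) : K := -p * x + p * q * y + z

theorem exceptionalForm_inv_comp [Field K] {a c : K} (ha : a ≠ 0) (hc : c ≠ 0) (b x y z : K) :
    exceptionalForm c⁻¹ a⁻¹ (b * c * x * exceptionalForm c a x y z)
        (c * a * y * exceptionalForm a b y z x) (a * b * z * exceptionalForm b c z x y) =
      exceptionalForm a b y z x * exceptionalForm b c z x y := by
  unfold exceptionalForm
  field_simp
  ring

end ExceptionalForm

theorem Fabc_mk (a b c x y z : ℂ) :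
    Fabc a b c (x, y, z) =
      (b * c * x * exceptionalForm c a x y z, c * a * y * exceptionalForm a b y z x,
        a * b * z * exceptionalForm b c z x y) := by
  simp only [Fabc, exceptionalForm, Prod.mk.injEq]
  refine ⟨?_, ?_, ?_⟩ <;> ring

theorem Fabc_inv_Fabc_mk {a b c : ℂ} (ha : a ≠ 0) (hb : b ≠ 0) (hc : c ≠ 0) (x y z : ℂ) :
    Fabc a⁻¹ b⁻¹ c⁻¹ (Fabc a b c (x, y, z)) =
      (exceptionalForm c a x y z * exceptionalForm a b y z x * exceptionalForm b c z x y) •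
        (x, y, z) := by
  rw [Fabc_mk a b c, Fabc_mk, exceptionalForm_inv_comp ha hc, exceptionalForm_inv_comp hb ha,
    exceptionalForm_inv_comp hc hb]
  simp only [Prod.smul_mk, smul_eq_mul, Prod.mk.injEq]
  refine ⟨?_, ?_, ?_⟩ <;> field_simp

/-- `f_{abc}` is birational with inverse `f_{a⁻¹b⁻¹c⁻¹}`: the composition of
the homogeneous lifts is a scalar multiple of the identity, not identically
zero. -/
theorem Fabc_inv_comp (a b c : ℂ) (ha : a ≠ 0) (hb : b ≠ 0) (hc : c ≠ 0) :
    (∀ v : ℂ × ℂ × ℂ, ∃ t : ℂ, Fabc a⁻¹ b⁻¹ c⁻¹ (Fabc a b c v) = t • v) ∧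
    ∃ v : ℂ × ℂ × ℂ, Fabc a⁻¹ b⁻¹ c⁻¹ (Fabc a b c v) ≠ 0 := by
  constructor
  · rintro ⟨x, y, z⟩
    exact ⟨_, Fabc_inv_Fabc_mk ha hb hc x y z⟩
  · -- `[1 : 0 : 0]` lies on none of the three contracted lines.
    refine ⟨(1, 0, 0), ?_⟩
    rw [Fabc_inv_Fabc_mk ha hb hc]
    simp [exceptionalForm, hb, hc]
end

section
/- For parameters a, b, c ∈ ℂ define F_{a,b,c} : ℂ³ → ℂ³ by F_{a,b,c}(x, y, z) = (bcx(−cx + acy + z), acy(x − ay + abz), abz(bcx + y − bz)). Let a, b, c ∈ ℂ be nonzero with abc ≠ −1. Then for every nonzero v ∈ ℂ³ one has F_{a,b,c}(v) = 0 if and only if there exists a nonzero t ∈ ℂ with v = t • (a, 1, 0) or v = t • (0, b, 1) or v = t • (1, 0, c). (Projectively: the indeterminacy set of f_{abc} is exactly {[a:1:0], [0:b:1], [1:0:c]}.) -/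
/-!
Each coordinate of the lift is, up to a constant, a coordinate function times a linear form. The
first two linear forms `ℓ₁`, `ℓ₂` satisfy `ℓ₁ + c * ℓ₂ = (1 + a * b * c) * z`, so a zero of the lift
lies on one of the three coordinate lines. On the line `z = 0` both forms are multiples of
`x - a * y`, which leaves only the multiples of `(a, 1, 0)`. The other two lines follow from the
symmetry that rotates `(x, y, z)` and `(a, b, c)` simultaneously.
-/

section QuadraticLift

variable {R : Type*} [CommRing R]

/-- The homogeneous lift `Fabc` of `f_{abc}` with coefficients in an arbitrary commutative ring; it
carries the computation of the indeterminacy points over any ring without zero divisors. -/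
def quadraticLift (a b c : R) : R × R × R → R × R × R := fun v =>
  (b * c * v.1 * (-c * v.1 + a * c * v.2.1 + v.2.2),
   a * c * v.2.1 * (v.1 - a * v.2.1 + a * b * v.2.2),
   a * b * v.2.2 * (b * c * v.1 + v.2.1 - b * v.2.2))

theorem Fabc_eq_quadraticLift (a b c : ℂ) : Fabc a b c = quadraticLift a b c := rfl

variable {a b c x y z : R}

theorem quadraticLift_rotate :
    quadraticLift b c a (y, z, x) =
      ((quadraticLift a b c (x, y, z)).2.1, (quadraticLift a b c (x, y, z)).2.2,
        (quadraticLift a b c (x, y, z)).1) := by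
  simp only [quadraticLift, Prod.mk.injEq]
  refine ⟨?_, ?_, ?_⟩ <;> ring

theorem quadraticLift_rotate_eq_zero_iff :
    quadraticLift b c a (y, z, x) = 0 ↔ quadraticLift a b c (x, y, z) = 0 := by
  simp only [quadraticLift_rotate (a := a) (x := x), Prod.ext_iff, Prod.fst_zero, Prod.snd_zero]
  tauto

variable [NoZeroDivisors R]

theorem coord_eq_zero_of_quadraticLift_eq_zero (ha : a ≠ 0) (hb : b ≠ 0) (hc : c ≠ 0)
    (habc : a * b * c ≠ -1) (h : quadraticLift a b c (x, y, z) = 0) :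
    x = 0 ∨ y = 0 ∨ z = 0 := by
  simp only [quadraticLift, Prod.mk_eq_zero] at h
  obtain ⟨h₁, h₂, -⟩ := h
  have scaled_prod_eq_zero : a * b * c * (1 + a * b * c) * (x * (y * z)) = 0 := by
    linear_combination a * y * h₁ + b * c * x * h₂
  have one_add_ne_zero : 1 + a * b * c ≠ 0 := fun h ↦ habc (eq_neg_of_add_eq_zero_right h)
  simpa only [mul_eq_zero, ha, hb, hc, one_add_ne_zero, false_or] using scaled_prod_eq_zero

theorem quadraticLift_third_zero_eq_zero_iff (ha : a ≠ 0) (hb : b ≠ 0) (hc : c ≠ 0) :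
    quadraticLift a b c (x, y, 0) = 0 ↔ x = a * y := by
  simp only [quadraticLift, Prod.mk_eq_zero]
  constructor
  · rintro ⟨h₁, h₂, -⟩
    have scaled_sq_eq_zero : a * b * c * c * (x - a * y) ^ 2 = 0 := by
      linear_combination -a * h₁ - a * b * c * h₂
    have x_sub_eq_zero : x - a * y = 0 := by
      simpa only [mul_eq_zero, ha, hb, hc, false_or, pow_eq_zero_iff two_ne_zero]
        using scaled_sq_eq_zero
    exact sub_eq_zero.mp x_sub_eq_zero
  · rintro rfl
    refine ⟨?_, ?_, ?_⟩ <;> ring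

theorem quadraticLift_eq_zero_iff (ha : a ≠ 0) (hb : b ≠ 0) (hc : c ≠ 0)
    (habc : a * b * c ≠ -1) :
    quadraticLift a b c (x, y, z) = 0 ↔
      z = 0 ∧ x = a * y ∨ x = 0 ∧ y = b * z ∨ y = 0 ∧ z = c * x := by
  constructor
  · intro h
    rcases coord_eq_zero_of_quadraticLift_eq_zero ha hb hc habc h with rfl | rfl | rfl
    · rw [← quadraticLift_rotate_eq_zero_iff, quadraticLift_third_zero_eq_zero_iff hb hc ha] at h
      exact .inr (.inl ⟨rfl, h⟩)
    · rw [← quadraticLift_rotate_eq_zero_iff, ← quadraticLift_rotate_eq_zero_iff,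
        quadraticLift_third_zero_eq_zero_iff hc ha hb] at h
      exact .inr (.inr ⟨rfl, h⟩)
    · exact .inl ⟨rfl, (quadraticLift_third_zero_eq_zero_iff ha hb hc).mp h⟩
  · rintro (⟨rfl, h⟩ | ⟨rfl, h⟩ | ⟨rfl, h⟩)
    · exact (quadraticLift_third_zero_eq_zero_iff ha hb hc).mpr h
    · exact quadraticLift_rotate_eq_zero_iff.mp
        ((quadraticLift_third_zero_eq_zero_iff hb hc ha).mpr h)
    · exact quadraticLift_rotate_eq_zero_iff.mp (quadraticLift_rotate_eq_zero_iff.mp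
        ((quadraticLift_third_zero_eq_zero_iff hc ha hb).mpr h))

theorem Fabc_indeterminacy_general (ha : a ≠ 0) (hb : b ≠ 0) (hc : c ≠ 0)
    (habc : a * b * c ≠ -1) {v : R × R × R} (hv : v ≠ 0) :
    quadraticLift a b c v = 0 ↔
      ∃ t : R, t ≠ 0 ∧ (v = t • (a, 1, 0) ∨ v = t • (0, b, 1) ∨ v = t • (1, 0, c)) := by
  obtain ⟨x, y, z⟩ := v
  rw [quadraticLift_eq_zero_iff ha hb hc habc]
  have scalar_ne_zero {t : R} {p : R × R × R} (h : (x, y, z) = t • p) : t ≠ 0 := by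
    rintro rfl
    exact hv (h.trans (zero_smul R p))
  constructor
  · rintro (⟨rfl, rfl⟩ | ⟨rfl, rfl⟩ | ⟨rfl, rfl⟩)
    · have h : ((a * y, y, 0) : R × R × R) = y • (a, 1, 0) := by simp [mul_comm]
      exact ⟨y, scalar_ne_zero h, .inl h⟩
    · have h : ((0, b * z, z) : R × R × R) = z • (0, b, 1) := by simp [mul_comm]
      exact ⟨z, scalar_ne_zero h, .inr (.inl h)⟩
    · have h : ((x, 0, c * x) : R × R × R) = x • (1, 0, c) := by simp [mul_comm]
      exact ⟨x, scalar_ne_zero h, .inr (.inr h)⟩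
  · simp only [Prod.smul_mk, smul_eq_mul, mul_zero, mul_one, Prod.mk.injEq]
    rintro ⟨t, -, ⟨rfl, rfl, rfl⟩ | ⟨rfl, rfl, rfl⟩ | ⟨rfl, rfl, rfl⟩⟩
    · exact .inl ⟨rfl, mul_comm _ _⟩
    · exact .inr (.inl ⟨rfl, mul_comm _ _⟩)
    · exact .inr (.inr ⟨rfl, mul_comm _ _⟩)

end QuadraticLift

/-- The indeterminacy set of `f_{abc}` is exactly
`{[a:1:0], [0:b:1], [1:0:c]}`. -/
theorem Fabc_indeterminacy (a b c : ℂ) (ha : a ≠ 0) (hb : b ≠ 0) (hc : c ≠ 0)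
    (habc : a * b * c ≠ -1) :
    ∀ v : ℂ × ℂ × ℂ, v ≠ 0 →
      (Fabc a b c v = 0 ↔
        ∃ t : ℂ, t ≠ 0 ∧
          (v = t • ((a : ℂ), (1 : ℂ), (0 : ℂ)) ∨
           v = t • ((0 : ℂ), b, (1 : ℂ)) ∨
           v = t • ((1 : ℂ), (0 : ℂ), c))) := by
  rw [Fabc_eq_quadraticLift]
  exact fun _ hv ↦ Fabc_indeterminacy_general ha hb hc habc hv
end
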